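/- Let (Ω,Σ,μ) be a probability space and φ : Ω → Ω a bijective bimeasurable measure-preserving transformation with Perron–Frobenius operator P on L¹(Ω,Σ,μ). If the sequence (Pⁿf) converges in L¹-norm for every f ∈ L¹(Ω,Σ,μ), then P is the identity operator: Pf = f for all f ∈ L¹(Ω,Σ,μ). -/

import Mathlib

open MeasureTheory Filter Set Topology
open scoped symmDiff ENNReal

/-!
The Koopman operator `f ↦ f ∘ φ` is isometric, the Perron–Frobenius operator `P` is a left inverse
of it, and for invertible `φ` it is onto; so `P` is an isometry too. If the orbit of `f` under an
isometry converges to `g`, then `g` is a fixed point, so every `Pⁿ f` has the same distance to `g`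
as `f`; these distances tend to `0`, hence `f = g`.
-/

theorem isFixedPt_of_isometry_of_tendsto_iterate {X : Type*} [EMetricSpace X] {T : X → X} {x y : X}
    (hT : Isometry T) (hx : Tendsto (fun n => T^[n] x) atTop (𝓝 y)) : Function.IsFixedPt T x := by
  have hy : Function.IsFixedPt T y := isFixedPt_of_tendsto_iterate hx hT.continuous.continuousAt
  have edist_iterate (n : ℕ) : edist (T^[n] x) y = edist x y := by
    induction n with
    | zero => rfl
    | succ n ih =>
      calc edist (T^[n + 1] x) y
          = edist (T (T^[n] x)) (T y) := by rw [Function.iterate_succ_apply', hy.eq]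
        _ = edist (T^[n] x) y := hT.edist_eq _ _
        _ = edist x y := ih
  have hlim : Tendsto (fun n => edist (T^[n] x) y) atTop (𝓝 0) := tendsto_iff_edist_tendsto_0.1 hx
  simp only [edist_iterate] at hlim
  have hxy : x = y := edist_eq_zero.1 (tendsto_nhds_unique tendsto_const_nhds hlim)
  rwa [hxy]

section Koopman

variable {α β E : Type*} [MeasurableSpace α] [MeasurableSpace β] [NormedAddCommGroup E]
  {μ : Measure α} {ν : Measure β} {φ : α → β}

theorem surjective_compMeasurePreserving_of_measurableEmbedding {p : ℝ≥0∞}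
    (hmp : MeasurePreserving φ μ ν) (hφ : MeasurableEmbedding φ) :
    Function.Surjective (Lp.compMeasurePreserving φ hmp : Lp E p ν → Lp E p μ) := by
  intro f
  obtain ⟨g, hg, hgf⟩ :=
    hφ.exists_stronglyMeasurable_extend (Lp.stronglyMeasurable f) fun _ => ⟨0⟩
  have hgν : MemLp g p ν := by
    rw [← hmp.map_eq, memLp_map_measure_iff hg.aestronglyMeasurable hmp.aemeasurable, hgf]
    exact Lp.memLp f
  refine ⟨hgν.toLp g, ?_⟩
  rw [Lp.toLp_compMeasurePreserving]
  simp only [hgf, Lp.toLp_coeFn]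

end Koopman

section PerronFrobenius

variable {α β E : Type*} [MeasurableSpace α] [MeasurableSpace β]
  [NormedAddCommGroup E] [NormedSpace ℝ E] {μ : Measure α} {ν : Measure β} {φ : α → β}

/-- `P` is the Perron–Frobenius (transfer) operator of `φ` on `L¹`: the integral of `P f` over `A`
is the integral of `f` over `φ ⁻¹' A`. Linearity and boundedness are not part of the definition,
since for complete `E` this identity determines `P`. -/
def IsPerronFrobenius (φ : α → β) (P : Lp E 1 μ → Lp E 1 ν) : Prop :=
  ∀ (f : Lp E 1 μ) (A : Set β), MeasurableSet A →
    ∫ y in A, P f y ∂ν = ∫ x in φ ⁻¹' A, f x ∂μ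

theorem setIntegral_compMeasurePreserving (hmp : MeasurePreserving φ μ ν) (f : Lp E 1 ν)
    {A : Set β} (hA : MeasurableSet A) :
    ∫ x in φ ⁻¹' A, Lp.compMeasurePreserving φ hmp f x ∂μ = ∫ y in A, f y ∂ν := by
  have hf : AEStronglyMeasurable f (μ.map φ) := (Lp.stronglyMeasurable f).aestronglyMeasurable
  calc ∫ x in φ ⁻¹' A, Lp.compMeasurePreserving φ hmp f x ∂μ
      = ∫ x in φ ⁻¹' A, f (φ x) ∂μ :=
        integral_congr_ae (ae_restrict_of_ae (Lp.coeFn_compMeasurePreserving f hmp))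
    _ = ∫ y in A, f y ∂(μ.map φ) := (setIntegral_map hA hf hmp.aemeasurable).symm
    _ = ∫ y in A, f y ∂ν := by rw [hmp.map_eq]

namespace IsPerronFrobenius

variable [CompleteSpace E] {P : Lp E 1 μ → Lp E 1 ν}

theorem leftInverse_compMeasurePreserving (hP : IsPerronFrobenius φ P)
    (hmp : MeasurePreserving φ μ ν) :
    Function.LeftInverse P (Lp.compMeasurePreserving φ hmp) := by
  intro f
  apply Lp.ext
  refine Integrable.ae_eq_of_forall_setIntegral_eq _ _ (L1.integrable_coeFn _)
    (L1.integrable_coeFn _) fun A hA _ => ?_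
  rw [hP _ A hA, setIntegral_compMeasurePreserving hmp f hA]

theorem isometry (hP : IsPerronFrobenius φ P) (hmp : MeasurePreserving φ μ ν)
    (hφ : MeasurableEmbedding φ) : Isometry P :=
  (Lp.isometry_compMeasurePreserving hmp).right_inv <|
    (hP.leftInverse_compMeasurePreserving hmp).rightInverse_of_surjective
      (surjective_compMeasurePreserving_of_measurableEmbedding hmp hφ)

end IsPerronFrobenius

end PerronFrobenius

theorem stmt13_general {Ω E : Type*} [MeasurableSpace Ω] [NormedAddCommGroup E] [NormedSpace ℝ E]
    [CompleteSpace E] {μ : Measure Ω} {φ : Ω → Ω} (hmp : MeasurePreserving φ μ μ)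
    (hφ : MeasurableEmbedding φ) {P : Lp E 1 μ → Lp E 1 μ} (hP : IsPerronFrobenius φ P)
    {f g : Lp E 1 μ} (hf : Tendsto (fun n => P^[n] f) atTop (𝓝 g)) : P f = f :=
  isFixedPt_of_isometry_of_tendsto_iterate (hP.isometry hmp hφ) hf

theorem stmt13 {Ω : Type*} [m : MeasurableSpace Ω] (μ : Measure Ω) [IsProbabilityMeasure μ]
    (φ : Ω → Ω) (hmp : MeasurePreserving φ μ μ) (hbij : Function.Bijective φ)
    (hbi : ∀ A : Set Ω, MeasurableSet A → MeasurableSet (φ '' A))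
    (P : Lp ℝ 1 μ →L[ℝ] Lp ℝ 1 μ)
    (hP : ∀ (f : Lp ℝ 1 μ) (A : Set Ω), MeasurableSet A →
      ∫ x in A, (P f) x ∂μ = ∫ x in φ ⁻¹' A, f x ∂μ)
    (hconv : ∀ f : Lp ℝ 1 μ, ∃ g : Lp ℝ 1 μ, Tendsto (fun n : ℕ => (P ^ n) f) atTop (𝓝 g)) :
    ∀ f : Lp ℝ 1 μ, P f = f := by
  intro f
  obtain ⟨g, hg⟩ := hconv f
  simp only [FunLike.coe_pow_eq_iterate] at hg
  exact stmt13_general hmp ⟨hbij.injective, hmp.measurable, fun {A} => hbi A⟩ hP hg
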